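/- Let r : V → V → Prop be a digraph and let s_1, t_1, s_2, t_2 be vertices of V. Define the digraph r' on Option V by: r' (some a) (some b) holds iff r a b holds; r' (some t_1) none holds; r' none (some s_2) holds; and no other arcs exist (in particular the new vertex none, serving as the waypoint w, has exactly one incoming arc, from t_1, and one outgoing arc, to s_2). Then the following are equivalent: (i) there exist a directed walk W from some s_1 to none and a directed walk W' from none to some t_2 in r' such that the concatenation of their arc lists has no duplicate arcs; (ii) there exist a directed path from s_1 to t_1 and a directed path from s_2 to t_2 in r that are arc-disjoint. -/

import Mathlib

/-- A directed walk in the digraph `r` from `a` to `b`: a nonempty list of vertices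
starting at `a`, ending at `b`, with `r` holding between consecutive vertices. -/
def IsDiwalk {V : Type*} (r : V → V → Prop) (a b : V) (l : List V) : Prop :=
  l ≠ [] ∧ l.head? = some a ∧ l.getLast? = some b ∧ l.Chain' r

/-- The arcs of a directed walk: the list of ordered pairs of consecutive vertices. -/
def arcs {V : Type*} (l : List V) : List (V × V) := l.zip l.tail

/-- A directed path: a directed walk with no repeated vertices. -/
def IsDipath {V : Type*} (r : V → V → Prop) (a b : V) (l : List V) : Prop :=
  IsDiwalk r a b l ∧ l.Nodup

/-- The digraph on `Option V` obtained from `r` by adding a new waypoint vertex `none`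
with exactly one incoming arc (from `t₁`) and one outgoing arc (to `s₂`). -/
def addWaypoint {V : Type*} (r : V → V → Prop) (t₁ s₂ : V) :
    Option V → Option V → Prop
  | some a, some b => r a b
  | some a, none => a = t₁
  | none, some b => b = s₂
  | none, none => False

theorem arcs_cons_cons {V : Type*} (a b : V) (l : List V) :
    arcs (a :: b :: l) = (a, b) :: arcs (b :: l) := by
  simp [arcs]

theorem arcs_single {V : Type*} (a : V) : arcs [a] = [] := by simp [arcs]

theorem arcs_suffix {V : Type*} (l₁ l₂ : List V) : ∀ p ∈ arcs l₂, p ∈ arcs (l₁ ++ l₂) := by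
  induction l₁ with
  | nil => simp
  | cons a l ih =>
    intro p hp
    have := ih p hp
    cases h : l ++ l₂ with
    | nil => rw [h] at this; simp [arcs] at this
    | cons b m =>
      rw [List.cons_append, h, arcs_cons_cons]
      rw [h] at this
      exact List.mem_cons_of_mem _ this

theorem fst_mem_arcs {V : Type*} (l : List V) (p : V × V) (hp : p ∈ arcs l) : p.1 ∈ l :=
  (List.of_mem_zip (a := p.1) (b := p.2) hp).1

theorem arcs_nodup {V : Type*} (l : List V) (h : l.Nodup) : (arcs l).Nodup := by
  induction l with
  | nil => simp [arcs]
  | cons a l ih =>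
    cases l with
    | nil => simp [arcs]
    | cons b m =>
      rw [arcs_cons_cons, List.nodup_cons]
      rw [List.nodup_cons] at h
      exact ⟨fun hh => h.1 (fst_mem_arcs _ _ hh), ih h.2⟩

theorem dipath_extend {V : Type*} {r : V → V → Prop} {s b t : V} {P : List V}
    (hr : r s b) (hP : IsDipath r b t P) :
    ∃ P', IsDipath r s t P' ∧ ∀ p ∈ arcs P', p = (s, b) ∨ p ∈ arcs P := by
  obtain ⟨⟨h1, h2, h3, h4⟩, h5⟩ := hP
  by_cases hs : s ∈ P
  · obtain ⟨l₁, l₂, rfl⟩ := List.append_of_mem hs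
    refine ⟨s :: l₂, ⟨⟨by simp, by simp, ?_, ?_⟩, ?_⟩, ?_⟩
    · simpa [List.getLast?_append] using h3
    · exact List.IsChain.right_of_append h4
    · exact (List.nodup_append.1 h5).2.1
    · intro p hp
      exact Or.inr (arcs_suffix _ _ p hp)
  · cases P with
    | nil => exact absurd rfl h1
    | cons c m =>
      obtain rfl : c = b := by simpa using h2
      refine ⟨s :: c :: m, ⟨⟨by simp, by simp, ?_, ?_⟩, ?_⟩, ?_⟩
      · simpa [List.getLast?_cons_cons] using h3
      · exact List.isChain_cons_cons.2 ⟨hr, h4⟩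
      · exact List.nodup_cons.2 ⟨hs, h5⟩
      · intro p hp
        rw [arcs_cons_cons] at hp
        simpa using hp

theorem dipath_single {V : Type*} (r : V → V → Prop) (s : V) : IsDipath r s s [s] := by
  refine ⟨⟨by simp, by simp, by simp, List.isChain_singleton _⟩, by simp⟩

theorem first_leg {V : Type*} (r : V → V → Prop) (t₁ s₂ : V) (W : List (Option V)) :
    ∀ s, (some s :: W).getLast? = some none → (some s :: W).IsChain (addWaypoint r t₁ s₂) →
    ∃ P, IsDipath r s t₁ P ∧ ∀ p ∈ arcs P, (some p.1, some p.2) ∈ arcs (some s :: W) := by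
  induction W with
  | nil => intro s h; simp at h
  | cons x W ih =>
    intro s h hc
    rw [List.isChain_cons_cons] at hc
    rw [List.getLast?_cons_cons] at h
    cases x with
    | none =>
      obtain rfl : s = t₁ := hc.1
      exact ⟨[s], dipath_single r s, by simp [arcs_single]⟩
    | some b =>
      obtain ⟨P, hP, hs⟩ := ih b h hc.2
      obtain ⟨P', hP', hs'⟩ := dipath_extend (show r s b from hc.1) hP
      refine ⟨P', hP', fun p hp => ?_⟩
      rw [arcs_cons_cons]
      rcases hs' p hp with rfl | h'
      · simp
      · exact List.mem_cons_of_mem _ (hs p h')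

theorem second_leg {V : Type*} (r : V → V → Prop) (t₁ s₂ t₂ : V) (W : List (Option V)) :
    ∀ x, (x :: W).getLast? = some (some t₂) → (x :: W).IsChain (addWaypoint r t₁ s₂) →
    ∃ y Q, (y = s₂ ∨ x = some y) ∧ IsDipath r y t₂ Q ∧
      ∀ p ∈ arcs Q, (some p.1, some p.2) ∈ arcs (x :: W) := by
  induction W with
  | nil =>
    intro x h _
    exact ⟨t₂, [t₂], Or.inr (by simpa using h), dipath_single r t₂, by simp [arcs_single]⟩
  | cons z W ih =>
    intro x h hc
    rw [List.isChain_cons_cons] at hc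
    rw [List.getLast?_cons_cons] at h
    obtain ⟨y, Q, hy, hQ, hs⟩ := ih z h hc.2
    rw [arcs_cons_cons]
    rcases hy with rfl | rfl
    · exact ⟨y, Q, Or.inl rfl, hQ, fun p hp => List.mem_cons_of_mem _ (hs p hp)⟩
    · cases x with
      | none => exact ⟨y, Q, Or.inl hc.1, hQ, fun p hp => List.mem_cons_of_mem _ (hs p hp)⟩
      | some a =>
        obtain ⟨P', hP', hs'⟩ := dipath_extend (show r a y from hc.1) hQ
        refine ⟨a, P', Or.inr rfl, hP', fun p hp => ?_⟩
        rcases hs' p hp with rfl | h'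
        · simp
        · exact List.mem_cons_of_mem _ (hs p h')

theorem mem_arcs_map {V : Type*} (P : List V) (p : Option V × Option V)
    (hp : p ∈ arcs (P.map some)) : ∃ q ∈ arcs P, p = (some q.1, some q.2) := by
  have : arcs (P.map some) = (arcs P).map (Prod.map some some) := by
    unfold arcs
    rw [← List.map_tail, List.zip_map]
  rw [this, List.mem_map] at hp
  obtain ⟨q, hq, rfl⟩ := hp
  exact ⟨q, hq, rfl⟩

theorem mem_arcs_snoc {V : Type*} (P : List V) (p : Option V × Option V)
    (hp : p ∈ arcs (P.map some ++ [none])) :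
    p.1 ≠ none ∧ (p.2 = none ∨ ∃ q ∈ arcs P, p = (some q.1, some q.2)) := by
  induction P with
  | nil => simp [arcs] at hp
  | cons a P ih =>
    cases P with
    | nil =>
      obtain rfl : p = (some a, none) := by simpa [arcs] using hp
      simp
    | cons b P =>
      rw [List.map_cons, List.map_cons, List.cons_append, List.cons_append, arcs_cons_cons,
        List.mem_cons] at hp
      rw [arcs_cons_cons]
      rcases hp with rfl | hp
      · exact ⟨by simp, Or.inr ⟨(a, b), by simp, rfl⟩⟩
      · obtain ⟨h1, h2⟩ := ih hp
        refine ⟨h1, h2.imp_right ?_⟩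
        rintro ⟨q, hq, h⟩
        exact ⟨q, List.mem_cons_of_mem _ hq, h⟩

/-- correctness of the reduction in Theorem 2. In the digraph obtained
from `r` by adding a waypoint vertex `none` with unique in-arc from `t₁` and unique
out-arc to `s₂`, there exist a directed walk from `s₁` to the waypoint and a directed
walk from the waypoint to `t₂` whose concatenated arc lists have no duplicates iff
there exist arc-disjoint directed paths from `s₁` to `t₁` and from `s₂` to `t₂` in `r`. -/
theorem waypoint_reduction_two_arc_disjoint_paths {V : Type*}
    (r : V → V → Prop) (s₁ t₁ s₂ t₂ : V) :
    (∃ W W' : List (Option V),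
        IsDiwalk (addWaypoint r t₁ s₂) (some s₁) none W ∧
        IsDiwalk (addWaypoint r t₁ s₂) none (some t₂) W' ∧
        (arcs W ++ arcs W').Nodup) ↔
    (∃ P Q : List V, IsDipath r s₁ t₁ P ∧ IsDipath r s₂ t₂ Q ∧
        List.Disjoint (arcs P) (arcs Q)) := by
  constructor
  · rintro ⟨W, W', ⟨h1, h2, h3, h4⟩, ⟨h1', h2', h3', h4'⟩, hn⟩
    cases W with
    | nil => exact absurd rfl h1
    | cons x W =>
    cases W' with
    | nil => exact absurd rfl h1'
    | cons x' W' =>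
    obtain rfl : x = some s₁ := by simpa using h2
    obtain rfl : x' = none := by simpa using h2'
    obtain ⟨P, hP, hs⟩ := first_leg r t₁ s₂ W s₁ h3 h4
    obtain ⟨y, Q, hy, hQ, hs'⟩ := second_leg r t₁ s₂ t₂ W' none h3' h4'
    obtain rfl : y = s₂ := by simpa using hy
    refine ⟨P, Q, hP, hQ, fun p hp hq => ?_⟩
    exact List.disjoint_of_nodup_append hn (hs p hp) (hs' p hq)
  · rintro ⟨P, Q, ⟨⟨h1, h2, h3, h4⟩, h5⟩, ⟨⟨h1', h2', h3', h4'⟩, h5'⟩, hd⟩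
    have key : ∀ L : List V, L.IsChain r → (L.map some).IsChain (addWaypoint r t₁ s₂) := by
      intro L hL
      rw [List.isChain_map]
      exact hL
    have inj := Option.some_injective V
    refine ⟨P.map some ++ [none], none :: Q.map some, ⟨by simp, ?_, by simp, ?_⟩,
      ⟨by simp, by simp, ?_, ?_⟩, ?_⟩
    · cases P with
      | nil => exact absurd rfl h1
      | cons c m => simpa using h2
    · refine List.IsChain.append (key P h4) (List.isChain_singleton _) ?_
      intro x hx y hy
      simp [h3] at hx hy
      subst hx hy
      rfl
    · cases Q with
      | nil => exact absurd rfl h1'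
      | cons c m =>
        rw [List.map_cons, List.getLast?_cons_cons, ← List.map_cons, List.getLast?_map, h3']
        rfl
    · refine List.isChain_cons.2 ⟨?_, key Q h4'⟩
      intro y hy
      simp [h2'] at hy
      subst hy
      rfl
    · rw [List.nodup_append']
      refine ⟨arcs_nodup _ ?_, arcs_nodup _ ?_, ?_⟩
      · rw [List.nodup_append']
        exact ⟨h5.map inj, by simp, by simp⟩
      · rw [List.nodup_cons]
        exact ⟨by simp, h5'.map inj⟩
      · intro p hp hq
        obtain ⟨ha, hb⟩ := mem_arcs_snoc P p hp
        cases Q with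
        | nil => exact absurd rfl h1'
        | cons c m =>
          rw [List.map_cons, arcs_cons_cons, List.mem_cons, ← List.map_cons] at hq
          rcases hq with rfl | hq
          · exact ha rfl
          · obtain ⟨q, hqq, rfl⟩ := mem_arcs_map _ _ hq
            rcases hb with hb | ⟨q', hq', he⟩
            · simp at hb
            · simp only [Prod.mk.injEq, Option.some.injEq] at he
              obtain rfl : q = q' := Prod.ext he.1 he.2
              exact hd hq' hqq
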